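/- arXiv:2106.00094 — 2 statements merged into one kernel-verified Lean document; each statement's English description precedes it below -/
import Mathlib

section
/- The map (γ, υ) ↦ [[γ, 0],[υ, J̆ ᵗγ^{−1} J̆]] is a well-defined injection from T_0 into Iw_{GSp_{2g}}, and every matrix in its image has similitude factor 1 (i.e. lies in Sp_{2g}(ℤ_p)). -/
open Matrix

/-- The `g × g` anti-diagonal matrix `J̆`: the `(i, j)` entry is `1` exactly when
`j = g + 1 - i` in one-based numbering, i.e. `i + j + 1 = g` in zero-based numbering. -/
def Jb (g : ℕ) (R : Type*) [CommRing R] : Matrix (Fin g) (Fin g) R :=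
  Matrix.of fun i j => if (i : ℕ) + (j : ℕ) + 1 = g then 1 else 0

/-- The standard symplectic matrix `J = [[0, -J̆], [J̆, 0]]` of size `2g`. -/
def Jmat (g : ℕ) (R : Type*) [CommRing R] :
    Matrix (Fin g ⊕ Fin g) (Fin g ⊕ Fin g) R :=
  Matrix.fromBlocks 0 (-(Jb g R)) (Jb g R) 0

/-- Membership in the symplectic similitude group `GSp_{2g}(R)`:
`ᵗγ J γ = ς · J` for some unit `ς` (the similitude factor). -/
def IsGSp {g : ℕ} {R : Type*} [CommRing R]
    (M : Matrix (Fin g ⊕ Fin g) (Fin g ⊕ Fin g) R) : Prop :=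
  IsUnit M.det ∧ ∃ s : Rˣ, Mᵀ * Jmat g R * M = (s : R) • Jmat g R

/-- The Iwahori subgroup `Iw_{GL_g}` of `GL_g(ℤ_p)`: invertible matrices over `ℤ_p`
whose reduction mod `p` is upper triangular. -/
def IwGL (p g : ℕ) [Fact p.Prime] : Set (Matrix (Fin g) (Fin g) ℤ_[p]) :=
  {M | IsUnit M.det ∧ ∀ i j : Fin g, j < i → (p : ℤ_[p]) ∣ M i j}

/-- The strict Iwahori subgroup `Iw⁺_{GL_g}` of `GL_g(ℤ_p)`: reduction mod `p` is diagonal. -/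
def IwGLplus (p g : ℕ) [Fact p.Prime] : Set (Matrix (Fin g) (Fin g) ℤ_[p]) :=
  {M | IsUnit M.det ∧ ∀ i j : Fin g, i ≠ j → (p : ℤ_[p]) ∣ M i j}

/-- `T_{GL_g,0}`: diagonal matrices in `GL_g(ℤ_p)`. -/
def TGL (p g : ℕ) [Fact p.Prime] : Set (Matrix (Fin g) (Fin g) ℤ_[p]) :=
  {M | IsUnit M.det ∧ ∀ i j : Fin g, i ≠ j → M i j = 0}

/-- `U_{GL_g,0}`: upper triangular unipotent matrices in `GL_g(ℤ_p)`. -/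
def UGL0 (p g : ℕ) [Fact p.Prime] : Set (Matrix (Fin g) (Fin g) ℤ_[p]) :=
  {M | (∀ i j : Fin g, j < i → M i j = 0) ∧ ∀ i : Fin g, M i i = 1}

/-- `U_{GL_g,1}`: upper triangular unipotent matrices congruent to `1` mod `p`. -/
def UGL1 (p g : ℕ) [Fact p.Prime] : Set (Matrix (Fin g) (Fin g) ℤ_[p]) :=
  {M | M ∈ UGL0 p g ∧ ∀ i j : Fin g, i < j → (p : ℤ_[p]) ∣ M i j}

/-- `U^{opp}_{GL_g,1}`: lower triangular unipotent matrices in `GL_g(ℤ_p)`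
congruent to `1` mod `p`. -/
def UGLopp1 (p g : ℕ) [Fact p.Prime] : Set (Matrix (Fin g) (Fin g) ℤ_[p]) :=
  {M | (∀ i j : Fin g, i < j → M i j = 0) ∧ (∀ i : Fin g, M i i = 1) ∧
    ∀ i j : Fin g, j < i → (p : ℤ_[p]) ∣ M i j}

/-- `B_{GL_g,0}`: upper triangular matrices in `GL_g(ℤ_p)`. -/
def BGL0 (p g : ℕ) [Fact p.Prime] : Set (Matrix (Fin g) (Fin g) ℤ_[p]) :=
  {M | IsUnit M.det ∧ ∀ i j : Fin g, j < i → M i j = 0}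

/-- The linear position of an index of a `2g × 2g` matrix indexed by `Fin g ⊕ Fin g`. -/
def idx {g : ℕ} : Fin g ⊕ Fin g → ℕ :=
  Sum.elim (fun i => (i : ℕ)) fun i => g + (i : ℕ)

/-- The Iwahori subgroup `Iw_{GSp_{2g}}` of `GSp_{2g}(ℤ_p)`: reduction mod `p`
is upper triangular. -/
def IwGSp (p g : ℕ) [Fact p.Prime] :
    Set (Matrix (Fin g ⊕ Fin g) (Fin g ⊕ Fin g) ℤ_[p]) :=
  {M | IsGSp M ∧ ∀ a b : Fin g ⊕ Fin g, idx b < idx a → (p : ℤ_[p]) ∣ M a b}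

/-- The set `T₀` of pairs `(γ, υ)` with `γ ∈ Iw_{GL_g}`, `υ ∈ M_g(pℤ_p)` and
`ᵗγ J̆ υ = ᵗυ J̆ γ`. -/
def T0set (p g : ℕ) [Fact p.Prime] :
    Set (Matrix (Fin g) (Fin g) ℤ_[p] × Matrix (Fin g) (Fin g) ℤ_[p]) :=
  {x | x.1 ∈ IwGL p g ∧ (∀ i j : Fin g, (p : ℤ_[p]) ∣ x.2 i j) ∧
    x.1ᵀ * Jb g ℤ_[p] * x.2 = x.2ᵀ * Jb g ℤ_[p] * x.1}

/-- The map `(γ, υ) ↦ [[γ, 0], [υ, J̆ ᵗγ⁻¹ J̆]]`. -/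
noncomputable def Phi (p g : ℕ) [Fact p.Prime]
    (x : Matrix (Fin g) (Fin g) ℤ_[p] × Matrix (Fin g) (Fin g) ℤ_[p]) :
    Matrix (Fin g ⊕ Fin g) (Fin g ⊕ Fin g) ℤ_[p] :=
  Matrix.fromBlocks x.1 0 x.2 (Jb g ℤ_[p] * (x.1⁻¹)ᵀ * Jb g ℤ_[p])

theorem Jb_apply_rev (g : ℕ) (R : Type*) [CommRing R] (i j : Fin g) :
    Jb g R i j = if j = i.rev then 1 else 0 := by
  have : ((i : ℕ) + (j : ℕ) + 1 = g) ↔ j = i.rev := by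
    rw [Fin.ext_iff, Fin.val_rev]; omega
  simp [Jb, this]

theorem Jb_mul_apply (g : ℕ) (R : Type*) [CommRing R] (X : Matrix (Fin g) (Fin g) R)
    (i j : Fin g) : (Jb g R * X) i j = X i.rev j := by
  simp [Matrix.mul_apply, Jb_apply_rev]

theorem Jb_transpose (g : ℕ) (R : Type*) [CommRing R] : (Jb g R)ᵀ = Jb g R := by
  ext i j
  simp [Jb, add_comm]

theorem mul_Jb_apply (g : ℕ) (R : Type*) [CommRing R] (X : Matrix (Fin g) (Fin g) R)
    (i j : Fin g) : (X * Jb g R) i j = X i j.rev := by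
  have h : (X * Jb g R)ᵀ = Jb g R * Xᵀ := by rw [Matrix.transpose_mul, Jb_transpose]
  have := congrFun (congrFun h j) i
  rw [Jb_mul_apply] at this
  simpa using this

theorem Jb_sq (g : ℕ) (R : Type*) [CommRing R] : Jb g R * Jb g R = 1 := by
  ext i j
  rw [Jb_mul_apply, Jb_apply_rev, Fin.rev_rev, Matrix.one_apply]
  simp [eq_comm]

theorem inv_dvd (p g : ℕ) [Fact p.Prime] (M : Matrix (Fin g) (Fin g) ℤ_[p])
    (hM : M ∈ IwGL p g) (i j : Fin g) (hij : j < i) : (p : ℤ_[p]) ∣ M⁻¹ i j := by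
  obtain ⟨hu, ht⟩ := hM
  let f := Ideal.Quotient.mk (Ideal.span {(p : ℤ_[p])})
  have hf : ∀ x, f x = 0 ↔ (p : ℤ_[p]) ∣ x := fun x => by
    rw [Ideal.Quotient.eq_zero_iff_mem, Ideal.mem_span_singleton]
  have h1 : M.map f * M⁻¹.map f = 1 := by
    rw [← Matrix.map_mul, Matrix.mul_nonsing_inv _ hu]
    simp
  have htri : (M.map f).BlockTriangular id := fun a b hab => (hf _).2 (ht a b hab)
  have hinv : (M.map f)⁻¹ = M⁻¹.map f := Matrix.inv_eq_right_inv h1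
  have : Invertible (M.map f) := ⟨M⁻¹.map f, mul_eq_one_comm.1 h1, h1⟩
  have h2 := Matrix.blockTriangular_inv_of_blockTriangular htri
  rw [hinv] at h2
  exact (hf _).1 (h2 hij)

theorem Phi_symp (p g : ℕ) [Fact p.Prime]
    (x : Matrix (Fin g) (Fin g) ℤ_[p] × Matrix (Fin g) (Fin g) ℤ_[p]) (hx : x ∈ T0set p g) :
    (Phi p g x)ᵀ * Jmat g ℤ_[p] * Phi p g x = Jmat g ℤ_[p] := by
  obtain ⟨⟨hu, -⟩, -, hs⟩ := hx
  have hJ := Jb_sq g ℤ_[p]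
  have h1 : x.1ᵀ * (x.1⁻¹)ᵀ = 1 := by
    rw [← Matrix.transpose_mul, Matrix.nonsing_inv_mul _ hu, Matrix.transpose_one]
  have e1 : x.1ᵀ * Jb g ℤ_[p] * (Jb g ℤ_[p] * (x.1⁻¹)ᵀ * Jb g ℤ_[p]) = Jb g ℤ_[p] := by
    calc _ = x.1ᵀ * (Jb g ℤ_[p] * Jb g ℤ_[p]) * (x.1⁻¹)ᵀ * Jb g ℤ_[p] := by
          simp only [Matrix.mul_assoc]
      _ = _ := by rw [hJ, Matrix.mul_one, h1, Matrix.one_mul]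
  have e2 : (Jb g ℤ_[p] * (x.1⁻¹)ᵀ * Jb g ℤ_[p])ᵀ * Jb g ℤ_[p] * x.1 = Jb g ℤ_[p] := by
    have := congrArg Matrix.transpose e1
    rw [Matrix.transpose_mul, Matrix.transpose_mul x.1ᵀ, Matrix.transpose_transpose,
      Jb_transpose, ← Matrix.mul_assoc] at this
    exact this
  unfold Phi Jmat
  rw [Matrix.fromBlocks_transpose, Matrix.fromBlocks_multiply, Matrix.fromBlocks_multiply]
  congr 1
  · simp [hs]
  · simpa using e1
  · simpa using e2
  · simp

theorem statement10 (p g : ℕ) [Fact p.Prime] (hg : 1 ≤ g) :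
    (∀ x ∈ T0set p g,
      Phi p g x ∈ IwGSp p g ∧
        (Phi p g x)ᵀ * Jmat g ℤ_[p] * Phi p g x = Jmat g ℤ_[p]) ∧
    ∀ x ∈ T0set p g, ∀ y ∈ T0set p g, Phi p g x = Phi p g y → x = y := by
  refine ⟨fun x hx => ⟨⟨⟨?_, 1, ?_⟩, ?_⟩, Phi_symp p g x hx⟩, ?_⟩
  · have hJ : IsUnit (Jb g ℤ_[p]).det :=
      (Matrix.isUnit_iff_isUnit_det _).1 (IsUnit.of_mul_eq_one _ (Jb_sq g ℤ_[p]))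
    have hu := hx.1.1
    unfold Phi
    rw [Matrix.det_fromBlocks_zero₁₂, Matrix.det_mul, Matrix.det_mul, Matrix.det_transpose]
    exact hu.mul ((hJ.mul (Matrix.isUnit_nonsing_inv_det _ hu)).mul hJ)
  · simpa using Phi_symp p g x hx
  · rintro (a | a) (b | b) hab
    · exact hx.1.2 a b hab
    · simp [Phi]
    · exact hx.2.1 a b
    · have hab' : b < a := by
        simp only [idx, Sum.elim_inr] at hab
        exact Fin.lt_def.2 (by omega)
      simp only [Phi, Matrix.fromBlocks_apply₂₂]
      rw [mul_Jb_apply, Jb_mul_apply, Matrix.transpose_apply]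
      exact inv_dvd p g x.1 hx.1 _ _ (Fin.rev_lt_rev.2 hab')
  · intro x _ y _ h
    obtain ⟨h1, -, h2, -⟩ := Matrix.fromBlocks_inj.1 h
    exact Prod.ext h1 h2
end

section
/- The set Ξ := {α ∈ GSp_{2g}(ℚ_p) ∩ M_{2g}(ℤ_p) : α_a ∈ Iw_{GL_g} and α_c ∈ M_g(pℤ_p)} is closed under matrix multiplication, and for every α ∈ Ξ and (γ, υ) ∈ T_0 the pair α·(γ, υ) := (α_aγ + α_bυ, α_cγ + α_dυ) again lies in T_0; moreover (αα')·(γ, υ) = α·(α'·(γ, υ)) for all α, α' ∈ Ξ, so this defines a left action of the monoid Ξ on T_0. -/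
open Matrix

/-- Entrywise inclusion `M(ℤ_p) → M(ℚ_p)`. -/
def toQ {p : ℕ} [Fact p.Prime] {m n : Type*} (M : Matrix m n ℤ_[p]) :
    Matrix m n ℚ_[p] :=
  M.map fun x => (x : ℚ_[p])

/-- The monoid `Ξ = [[Iw_{GL_g}, M_g(ℤ_p)], [M_g(pℤ_p), M_g(ℤ_p)]] ∩ GSp_{2g}(ℚ_p)`. -/
def XiSet (p g : ℕ) [Fact p.Prime] :
    Set (Matrix (Fin g ⊕ Fin g) (Fin g ⊕ Fin g) ℤ_[p]) :=
  {α | IsGSp (toQ α) ∧ α.toBlocks₁₁ ∈ IwGL p g ∧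
    ∀ i j : Fin g, (p : ℤ_[p]) ∣ α.toBlocks₂₁ i j}

/-- The left action of `Ξ` on pairs `(γ, υ)`:
`α · (γ, υ) = (α_aγ + α_bυ, α_cγ + α_dυ)`. -/
noncomputable def XiAct (p g : ℕ) [Fact p.Prime]
    (α : Matrix (Fin g ⊕ Fin g) (Fin g ⊕ Fin g) ℤ_[p])
    (x : Matrix (Fin g) (Fin g) ℤ_[p] × Matrix (Fin g) (Fin g) ℤ_[p]) :
    Matrix (Fin g) (Fin g) ℤ_[p] × Matrix (Fin g) (Fin g) ℤ_[p] :=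
  (α.toBlocks₁₁ * x.1 + α.toBlocks₁₂ * x.2, α.toBlocks₂₁ * x.1 + α.toBlocks₂₂ * x.2)

theorem iw_comb {p g : ℕ} [Fact p.Prime] {a c b u : Matrix (Fin g) (Fin g) ℤ_[p]}
    (ha : a ∈ IwGL p g) (hc : c ∈ IwGL p g) (hu : ∀ i j, (p : ℤ_[p]) ∣ u i j) :
    a * c + b * u ∈ IwGL p g := by
  have hbu : ∀ i j, (p : ℤ_[p]) ∣ (b * u) i j := fun i j => by
    rw [Matrix.mul_apply]
    exact Finset.dvd_sum fun k _ => Dvd.dvd.mul_left (hu k j) _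
  refine ⟨?_, ?_⟩
  · apply isUnit_of_map_unit (IsLocalRing.residue ℤ_[p])
    have h0 : (IsLocalRing.residue ℤ_[p]).mapMatrix (b * u) = 0 := by
      ext i j
      obtain ⟨t, ht⟩ := hbu i j
      have hp : IsLocalRing.residue ℤ_[p] (p : ℤ_[p]) = 0 := by
        rw [IsLocalRing.residue_eq_zero_iff, IsLocalRing.mem_maximalIdeal]
        exact PadicInt.p_nonunit
      rw [RingHom.mapMatrix_apply, Matrix.map_apply, ht, map_mul, hp, zero_mul,
        Matrix.zero_apply]
    rw [RingHom.map_det, map_add, h0, add_zero, ← RingHom.map_det, Matrix.det_mul]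
    exact (ha.1.mul hc.1).map _
  · intro i j hij
    rw [Matrix.add_apply]
    refine dvd_add ?_ (hbu i j)
    rw [Matrix.mul_apply]
    refine Finset.dvd_sum fun k _ => ?_
    rcases lt_or_ge k i with h | h
    · exact Dvd.dvd.mul_right (ha.2 i k h) _
    · exact Dvd.dvd.mul_left (hc.2 k j (lt_of_lt_of_le hij h)) _

theorem dvd_comb {p g : ℕ} [Fact p.Prime] {a c b u : Matrix (Fin g) (Fin g) ℤ_[p]}
    (ha : ∀ i j, (p : ℤ_[p]) ∣ a i j) (hu : ∀ i j, (p : ℤ_[p]) ∣ u i j) :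
    ∀ i j, (p : ℤ_[p]) ∣ (a * c + b * u) i j := by
  intro i j
  rw [Matrix.add_apply, Matrix.mul_apply, Matrix.mul_apply]
  exact dvd_add (Finset.dvd_sum fun k _ => Dvd.dvd.mul_right (ha i k) _)
    (Finset.dvd_sum fun k _ => Dvd.dvd.mul_left (hu k j) _)

theorem toQ_mul {p : ℕ} [Fact p.Prime] {l m n : Type*} [Fintype m]
    (A : Matrix l m ℤ_[p]) (B : Matrix m n ℤ_[p]) : toQ (A * B) = toQ A * toQ B :=
  Matrix.map_mul (f := PadicInt.Coe.ringHom (p := p))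

theorem toQ_inj {p : ℕ} [Fact p.Prime] {m n : Type*} {A B : Matrix m n ℤ_[p]}
    (h : toQ A = toQ B) : A = B := by
  ext i j
  exact Subtype.ext (congrFun (congrFun h i) j)

theorem toQ_Jmat (p g : ℕ) [Fact p.Prime] : toQ (Jmat g ℤ_[p]) = Jmat g ℚ_[p] := by
  ext i j
  rcases i with i | i <;> rcases j with j | j <;> simp [toQ, Jmat, Jb] <;> split_ifs <;> simp

theorem toBlocks_mul {g : ℕ} {R : Type*} [CommRing R]
    (A B : Matrix (Fin g ⊕ Fin g) (Fin g ⊕ Fin g) R) :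
    A * B = fromBlocks
      (A.toBlocks₁₁ * B.toBlocks₁₁ + A.toBlocks₁₂ * B.toBlocks₂₁)
      (A.toBlocks₁₁ * B.toBlocks₁₂ + A.toBlocks₁₂ * B.toBlocks₂₂)
      (A.toBlocks₂₁ * B.toBlocks₁₁ + A.toBlocks₂₂ * B.toBlocks₂₁)
      (A.toBlocks₂₁ * B.toBlocks₁₂ + A.toBlocks₂₂ * B.toBlocks₂₂) := by
  rw [← fromBlocks_multiply, fromBlocks_toBlocks, fromBlocks_toBlocks]

theorem fromRows_act {g : ℕ} {R : Type*} [CommRing R]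
    (A : Matrix (Fin g ⊕ Fin g) (Fin g ⊕ Fin g) R) (x y : Matrix (Fin g) (Fin g) R) :
    A * fromRows x y = fromRows (A.toBlocks₁₁ * x + A.toBlocks₁₂ * y)
      (A.toBlocks₂₁ * x + A.toBlocks₂₂ * y) := by
  conv_lhs => rw [← fromBlocks_toBlocks A]
  rw [fromBlocks_mul_fromRows]

theorem form_iff {g : ℕ} {R : Type*} [CommRing R] (x y : Matrix (Fin g) (Fin g) R) :
    (fromRows x y)ᵀ * Jmat g R * fromRows x y = 0 ↔ xᵀ * Jb g R * y = yᵀ * Jb g R * x := by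
  rw [Jmat, transpose_fromRows, fromCols_mul_fromBlocks, fromCols_mul_fromRows]
  simp only [Matrix.mul_zero, zero_add, add_zero, Matrix.mul_neg, Matrix.neg_mul]
  rw [← sub_eq_add_neg, sub_eq_zero, eq_comm]

theorem statement13 (p g : ℕ) [Fact p.Prime] (hg : 1 ≤ g) :
    (∀ α ∈ XiSet p g, ∀ α' ∈ XiSet p g, α * α' ∈ XiSet p g) ∧
    (∀ α ∈ XiSet p g, ∀ x ∈ T0set p g, XiAct p g α x ∈ T0set p g) ∧
    ∀ α ∈ XiSet p g, ∀ α' ∈ XiSet p g, ∀ x ∈ T0set p g,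
      XiAct p g (α * α') x = XiAct p g α (XiAct p g α' x) := by
  refine ⟨?_, ?_, ?_⟩
  · rintro α ⟨⟨hd, s, hs⟩, ha, hc⟩ α' ⟨⟨hd', s', hs'⟩, ha', hc'⟩
    refine ⟨⟨?_, s * s', ?_⟩, ?_, ?_⟩
    · rw [toQ_mul, det_mul]
      exact hd.mul hd'
    · rw [toQ_mul, transpose_mul]
      calc _ = (toQ α')ᵀ * ((toQ α)ᵀ * Jmat g ℚ_[p] * toQ α) * toQ α' := by
            simp only [Matrix.mul_assoc]
        _ = _ := by
            rw [hs, Matrix.mul_smul, Matrix.smul_mul, hs', smul_smul, Units.val_mul]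
    · rw [toBlocks_mul, toBlocks_fromBlocks₁₁]
      exact iw_comb ha ha' hc'
    · rw [toBlocks_mul, toBlocks_fromBlocks₂₁]
      exact dvd_comb hc hc'
  · rintro α ⟨⟨hd, s, hs⟩, ha, hc⟩ ⟨x, y⟩ ⟨hx, hy, hxy⟩
    refine ⟨iw_comb ha hx hy, dvd_comb hc hy, ?_⟩
    refine (form_iff _ _).1 ?_
    have h0 := (form_iff _ _).2 hxy
    simp only [XiAct]
    rw [← fromRows_act]
    simp only at h0
    apply toQ_inj
    have h1 := congrArg toQ h0
    have hz : toQ (0 : Matrix (Fin g) (Fin g) ℤ_[p]) = 0 := by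
      ext i j
      simp [toQ]
    have ht : ∀ {m n : Type} (A : Matrix m n ℤ_[p]), toQ Aᵀ = (toQ A)ᵀ := fun A => rfl
    rw [hz, toQ_mul, toQ_mul, toQ_Jmat, ht] at h1
    rw [hz, toQ_mul, toQ_mul, toQ_Jmat, ht, toQ_mul, transpose_mul]
    calc _ = (toQ (fromRows x y))ᵀ * ((toQ α)ᵀ * Jmat g ℚ_[p] * toQ α) *
              toQ (fromRows x y) := by
            simp only [Matrix.mul_assoc]
      _ = _ := by
            rw [hs, Matrix.mul_smul, Matrix.smul_mul, h1, smul_zero]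
  · rintro α - α' - ⟨x, y⟩ -
    have h : fromRows (XiAct p g (α * α') (x, y)).1 (XiAct p g (α * α') (x, y)).2 =
        fromRows (XiAct p g α (XiAct p g α' (x, y))).1
          (XiAct p g α (XiAct p g α' (x, y))).2 := by
      simp only [XiAct]
      rw [← fromRows_act, ← fromRows_act, ← fromRows_act, Matrix.mul_assoc]
    obtain ⟨h1, h2⟩ := fromRows_inj h
    exact Prod.ext h1 h2
end
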